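/- Let d_1,…,d_q be positive integers with ∑_j d_j = p, and for φ ∈ ℝ^q let θ(φ,d) ∈ ℝ^p be the vector in which φ_j appears d_j times, for j = 1,…,q. Define D(φ) = C(θ(φ,d)) and G_j(φ) = ∂D/∂φ_j. Then on the set {φ ∈ ℝ^q : φ_i ≠ φ_j for all i ≠ j}, the following Pfaffian system holds: for i ≠ j, ∂G_j/∂φ_i = (d_j G_i − d_i G_j)/(2(φ_i − φ_j)), and for each i, ∂G_i/∂φ_i = G_i − ∑_{k ≠ i} (d_k G_i − d_i G_k)/(2(φ_i − φ_k)). -/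

import Mathlib

open MeasureTheory

/-- The normalising constant of the Bingham distribution. -/
noncomputable def binghamC (p : ℕ) (θ : Fin p → ℝ) : ℝ :=
  ∫ x in {x : EuclideanSpace ℝ (Fin p) | ‖x‖ = 1},
    Real.exp (∑ i, θ i * x i ^ 2) ∂ μH[(p : ℝ) - 1]

open Filter Topology in
/-- Differentiation under the integral sign over a compact set of finite measure. -/
theorem hasFDerivAt_setIntegral_of_continuous {H E : Type*} [NormedAddCommGroup H]
    [NormedSpace ℝ H] [ProperSpace H] [TopologicalSpace E] [T2Space E]
    [SecondCountableTopology E] [MeasurableSpace E] [BorelSpace E]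
    {μ : Measure E} {K : Set E} (hK : IsCompact K) (hμ : μ K ≠ ⊤)
    {F : H → E → ℝ} {F' : H → E → H →L[ℝ] ℝ} (hF : ∀ h, Continuous (F h))
    (hF' : Continuous fun z : H × E => F' z.1 z.2)
    (hd : ∀ h x, HasFDerivAt (fun h => F h x) (F' h x) h) (h₀ : H) :
    Integrable (F' h₀) (μ.restrict K) ∧
      HasFDerivAt (fun h => ∫ x in K, F h x ∂μ) (∫ x in K, F' h₀ x ∂μ) h₀ := by
  have : IsFiniteMeasure (μ.restrict K) := ⟨by simpa using hμ.lt_top⟩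
  have hF'₀ : Continuous (F' h₀) := hF'.comp (by fun_prop : Continuous fun x : E => (h₀, x))
  obtain ⟨C, hC⟩ := ((isCompact_closedBall h₀ (1 : ℝ)).prod hK).exists_bound_of_continuousOn
    hF'.continuousOn
  obtain ⟨C₀, hC₀⟩ := hK.exists_bound_of_continuousOn (hF h₀).continuousOn
  have hb : ∀ᵐ x ∂μ.restrict K, ∀ h ∈ Metric.closedBall h₀ (1 : ℝ), ‖F' h x‖ ≤ C :=
    (ae_restrict_mem hK.measurableSet).mono fun x hx h hh => hC (h, x) ⟨hh, hx⟩
  refine ⟨Integrable.of_bound hF'₀.aestronglyMeasurable C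
    (hb.mono fun x hx => hx h₀ (by simp)), ?_⟩
  exact hasFDerivAt_integral_of_dominated_of_fderiv_le (bound := fun _ => C)
    (Metric.closedBall_mem_nhds h₀ one_pos)
    (Eventually.of_forall fun h => (hF h).aestronglyMeasurable)
    (Integrable.of_bound (hF h₀).aestronglyMeasurable C₀
      ((ae_restrict_mem hK.measurableSet).mono fun x hx => hC₀ x hx))
    hF'₀.aestronglyMeasurable hb (integrable_const C)
    (Eventually.of_forall fun x h _ => hd h x)

/-- Changing two coordinates changes a weighted sum of squares only in two terms. -/
theorem sum_mul_sq_ite_ite {ι : Type*} [Fintype ι] [DecidableEq ι] {a b : ι} (hab : a ≠ b)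
    (θ x : ι → ℝ) (u v : ℝ) :
    ∑ i, θ i * (if i = a then u else if i = b then v else x i) ^ 2
      = ∑ i, θ i * x i ^ 2 + θ a * (u ^ 2 - x a ^ 2) + θ b * (v ^ 2 - x b ^ 2) := by
  rw [add_assoc, ← sub_eq_iff_eq_add', ← Finset.sum_sub_distrib]
  rw [Finset.sum_eq_add a b hab]
  · simp [hab.symm, mul_sub]
  · rintro i - ⟨h1, h2⟩
    simp [h1, h2]
  · simp
  · simp

/-- The rotation by the angle `t` in the plane of the coordinates `a` and `b`. -/
noncomputable def planeRotation {ι : Type*} [Fintype ι] [DecidableEq ι] {a b : ι} (hab : a ≠ b)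
    (t : ℝ) : EuclideanSpace ℝ ι ≃ₗᵢ[ℝ] EuclideanSpace ℝ ι :=
  LinearIsometry.toLinearIsometryEquiv
    { toFun := fun x => WithLp.toLp 2 fun i =>
        if i = a then Real.cos t * x a - Real.sin t * x b
        else if i = b then Real.sin t * x a + Real.cos t * x b else x i
      map_add' := fun x y => by
        ext i
        simp only [PiLp.add_apply]
        split_ifs <;> ring
      map_smul' := fun r x => by
        ext i
        simp only [PiLp.smul_apply, smul_eq_mul, RingHom.id_apply]
        split_ifs <;> ring
      norm_map' := fun x => by
        have h := sum_mul_sq_ite_ite hab 1 x (Real.cos t * x a - Real.sin t * x b)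
          (Real.sin t * x a + Real.cos t * x b)
        simp only [Pi.one_apply, one_mul] at h
        simp only [LinearMap.coe_mk, AddHom.coe_mk, EuclideanSpace.norm_eq, Real.norm_eq_abs,
          sq_abs, h]
        congr 1
        linear_combination (x a ^ 2 + x b ^ 2) * Real.sin_sq_add_cos_sq t }
    rfl

theorem planeRotation_apply {ι : Type*} [Fintype ι] [DecidableEq ι] {a b : ι} (hab : a ≠ b)
    (t : ℝ) (x : EuclideanSpace ℝ ι) (i : ι) :
    planeRotation hab t x i = if i = a then Real.cos t * x a - Real.sin t * x b
        else if i = b then Real.sin t * x a + Real.cos t * x b else x i := rfl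

theorem isCompact_norm_eq_one (p : ℕ) :
    IsCompact {x : EuclideanSpace ℝ (Fin p) | ‖x‖ = 1} := by
  have h : {x : EuclideanSpace ℝ (Fin p) | ‖x‖ = 1} = Metric.sphere 0 1 := by
    ext x
    simp
  exact h ▸ isCompact_sphere _ _

theorem setIntegral_norm_eq_one_comp_isometry {p : ℕ} (s : ℝ)
    (R : EuclideanSpace ℝ (Fin p) ≃ₗᵢ[ℝ] EuclideanSpace ℝ (Fin p))
    (f : EuclideanSpace ℝ (Fin p) → ℝ) :
    ∫ x in {x : EuclideanSpace ℝ (Fin p) | ‖x‖ = 1}, f (R x) ∂μH[s]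
      = ∫ x in {x : EuclideanSpace ℝ (Fin p) | ‖x‖ = 1}, f x ∂μH[s] := by
  have h := (R.toIsometryEquiv.measurePreserving_hausdorffMeasure s).setIntegral_preimage_emb
    R.toIsometryEquiv.toHomeomorph.measurableEmbedding f {x | ‖x‖ = 1}
  simpa using h

/-- Infinitesimal rotation invariance, applied to `x_a x_b exp (∑ θ_i x_i ^ 2)`. -/
theorem setIntegral_sq_sub_sq_mul_exp {p : ℕ} {s : ℝ}
    (hμ : (μH[s] : Measure (EuclideanSpace ℝ (Fin p))) {x | ‖x‖ = 1} ≠ ⊤)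
    (θ : Fin p → ℝ) {a b : Fin p} (hab : a ≠ b) :
    ∫ x in {x : EuclideanSpace ℝ (Fin p) | ‖x‖ = 1},
      (x a ^ 2 - x b ^ 2 + 2 * (θ b - θ a) * (x a ^ 2 * x b ^ 2))
        * Real.exp (∑ i, θ i * x i ^ 2) ∂μH[s] = 0 := by
  let A : ℝ → EuclideanSpace ℝ (Fin p) → ℝ := fun t x => Real.cos t * x a - Real.sin t * x b
  let B : ℝ → EuclideanSpace ℝ (Fin p) → ℝ := fun t x => Real.sin t * x a + Real.cos t * x b
  let W : ℝ → EuclideanSpace ℝ (Fin p) → ℝ := fun t x =>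
    ∑ i, θ i * x i ^ 2 + θ a * (A t x ^ 2 - x a ^ 2) + θ b * (B t x ^ 2 - x b ^ 2)
  let F : ℝ → EuclideanSpace ℝ (Fin p) → ℝ := fun t x => A t x * B t x * Real.exp (W t x)
  let F' : ℝ → EuclideanSpace ℝ (Fin p) → ℝ := fun t x =>
    (A t x ^ 2 - B t x ^ 2 + 2 * (θ b - θ a) * (A t x ^ 2 * B t x ^ 2)) * Real.exp (W t x)
  have hder : ∀ t x, HasDerivAt (fun t => F t x) (F' t x) t := by
    intro t x
    have hA : HasDerivAt (fun t => A t x) (-B t x) t := by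
      refine (((Real.hasDerivAt_cos t).mul_const (x a)).sub
        ((Real.hasDerivAt_sin t).mul_const (x b))).congr_deriv ?_
      simp only [B]; ring
    have hB : HasDerivAt (fun t => B t x) (A t x) t := by
      refine (((Real.hasDerivAt_sin t).mul_const (x a)).add
        ((Real.hasDerivAt_cos t).mul_const (x b))).congr_deriv ?_
      simp only [A]; ring
    have hW := ((((hA.pow 2).sub_const (x a ^ 2)).const_mul (θ a)).const_add
      (∑ i, θ i * x i ^ 2)).add (((hB.pow 2).sub_const (x b ^ 2)).const_mul (θ b))
    refine ((hA.mul hB).mul hW.exp).congr_deriv ?_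
    simp only [F', W, Pi.add_apply, Pi.mul_apply, Pi.pow_apply]
    push_cast
    ring
  have hF'c : Continuous fun z : ℝ × EuclideanSpace ℝ (Fin p) => F' z.1 z.2 := by
    simp only [F', W, A, B]; fun_prop
  have h := hasFDerivAt_setIntegral_of_continuous (isCompact_norm_eq_one p) hμ
    (F := F) (F' := fun t x => F' t x • (1 : ℝ →L[ℝ] ℝ))
    (fun t => by simp only [F, W, A, B]; fun_prop)
    (by fun_prop)
    (fun t x => (hder t x).hasFDerivAt.congr_fderiv (by ext; simp)) 0
  have hconst : (fun t => ∫ x in {x : EuclideanSpace ℝ (Fin p) | ‖x‖ = 1}, F t x ∂μH[s])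
      = fun _ => ∫ x in {x : EuclideanSpace ℝ (Fin p) | ‖x‖ = 1},
        x a * x b * Real.exp (∑ i, θ i * x i ^ 2) ∂μH[s] := by
    funext t
    rw [← setIntegral_norm_eq_one_comp_isometry s (planeRotation hab t)
      fun x => x a * x b * Real.exp (∑ i, θ i * x i ^ 2)]
    simp only [planeRotation_apply, sum_mul_sq_ite_ite hab, F, W, A, B, if_true, hab.symm, if_false]
  rw [hconst] at h
  have h0 := congrArg (fun l : ℝ →L[ℝ] ℝ => l 1) (h.2.unique (hasFDerivAt_const _ _))
  simp only [ContinuousLinearMap.integral_apply h.1] at h0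
  simpa [F', W, A, B] using h0

/-- Differentiation of exponential integrals over the sphere in the parameters of the blocks. -/
theorem fderiv_setIntegral_mul_exp {p q : ℕ} {s : ℝ}
    (hμ : (μH[s] : Measure (EuclideanSpace ℝ (Fin p))) {x | ‖x‖ = 1} ≠ ⊤)
    (σ : Fin p → Fin q) {g : EuclideanSpace ℝ (Fin p) → ℝ} (hg : Continuous g)
    (ψ : Fin q → ℝ) (j : Fin q) :
    fderiv ℝ (fun ψ : Fin q → ℝ => ∫ x in {x : EuclideanSpace ℝ (Fin p) | ‖x‖ = 1},
        g x * Real.exp (∑ i, ψ (σ i) * x i ^ 2) ∂μH[s]) ψ (Pi.single j 1)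
      = ∫ x in {x : EuclideanSpace ℝ (Fin p) | ‖x‖ = 1},
        g x * (∑ i with σ i = j, x i ^ 2) * Real.exp (∑ i, ψ (σ i) * x i ^ 2) ∂μH[s] := by
  let L : EuclideanSpace ℝ (Fin p) → (Fin q → ℝ) →L[ℝ] ℝ := fun x =>
    ∑ i, x i ^ 2 • ContinuousLinearMap.proj (R := ℝ) (φ := fun _ : Fin q => ℝ) (σ i)
  have hL : ∀ x ψ, L x ψ = ∑ i, ψ (σ i) * x i ^ 2 := fun x ψ => by
    simp [L, mul_comm]
  have hLc : Continuous L := by simp only [L]; fun_prop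
  simp only [← hL]
  have h := hasFDerivAt_setIntegral_of_continuous (isCompact_norm_eq_one p) hμ
    (F := fun ψ x => g x * Real.exp (L x ψ))
    (F' := fun ψ x => (g x * Real.exp (L x ψ)) • L x)
    (fun ψ => by fun_prop) (by fun_prop)
    (fun ψ x => by
      simpa [smul_smul] using ((L x).hasFDerivAt (x := ψ)).exp.const_mul (g x)) ψ
  rw [h.2.fderiv, ContinuousLinearMap.integral_apply h.1]
  congr 1 with x
  simp only [smul_apply, smul_eq_mul, hL, Finset.sum_filter, Pi.single_apply,
    ite_mul, one_mul, zero_mul]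
  ring

/-- Pfaffian system for the Bingham normalising constant in the degenerate case:
`θ(φ,d)` is the parameter vector (encoded by an assignment `σ : Fin p → Fin q`
whose fibre over `j` has cardinality `d j`) in which `φ_j` appears `d_j` times.
With `D(φ) = C(θ(φ,d))` and `G_j = ∂D/∂φ_j`, on the set of pairwise distinct
`φ`: for `i ≠ j`, `∂_{φ_i} G_j = (d_j G_i − d_i G_j)/(2(φ_i − φ_j))`, and
`∂_{φ_i} G_i = G_i − ∑_{k ≠ i} (d_k G_i − d_i G_k)/(2(φ_i − φ_k))`. -/
theorem bingham_pfaffian_degenerate (p q : ℕ) (hp : 2 ≤ p)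
    (d : Fin q → ℕ) (hd : ∀ j, 0 < d j) (hsum : ∑ j, d j = p)
    (σ : Fin p → Fin q)
    (hσ : ∀ j, (Finset.univ.filter fun i => σ i = j).card = d j)
    (φ : Fin q → ℝ) (hdist : ∀ i j : Fin q, i ≠ j → φ i ≠ φ j) :
    let D : (Fin q → ℝ) → ℝ := fun ψ => binghamC p (fun i => ψ (σ i))
    let G : Fin q → (Fin q → ℝ) → ℝ := fun j ψ => fderiv ℝ D ψ (Pi.single j 1)
    (∀ i j : Fin q, i ≠ j →
      fderiv ℝ (G j) φ (Pi.single i 1)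
        = (d j * G i φ - d i * G j φ) / (2 * (φ i - φ j)))
    ∧ (∀ i : Fin q,
      fderiv ℝ (G i) φ (Pi.single i 1)
        = G i φ - ∑ k ∈ Finset.univ.erase i,
            (d k * G i φ - d i * G k φ) / (2 * (φ i - φ k))) := by
  intro D G
  by_cases hμ : (μH[(p : ℝ) - 1] : Measure (EuclideanSpace ℝ (Fin p))) {x | ‖x‖ = 1} = ⊤
  · have hD : D = 0 := by
      funext ψ
      refine integral_undef fun hi => ?_
      have hK := isCompact_norm_eq_one p
      obtain ⟨C, hC⟩ := hK.exists_bound_of_continuousOn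
        (f := fun x : EuclideanSpace ℝ (Fin p) => (Real.exp (∑ i, ψ (σ i) * x i ^ 2))⁻¹)
        (Continuous.continuousOn (by fun_prop (disch := exact fun _ => (Real.exp_pos _).ne')))
      have h1 := hi.bdd_mul (c := C)
        (f := fun x : EuclideanSpace ℝ (Fin p) => (Real.exp (∑ i, ψ (σ i) * x i ^ 2))⁻¹)
        (Continuous.aestronglyMeasurable
          (by fun_prop (disch := exact fun _ => (Real.exp_pos _).ne')))
        ((ae_restrict_mem hK.measurableSet).mono hC)
      simp only [inv_mul_cancel₀ (Real.exp_pos _).ne', integrable_const_iff,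
        isFiniteMeasure_restrict] at h1
      simp [hμ] at h1
    have hG : ∀ j, G j = 0 := fun j => by
      funext ψ
      simp [G, hD]
    simp [hG]
  set K : Set (EuclideanSpace ℝ (Fin p)) := {x | ‖x‖ = 1}
  have hK : IsCompact K := isCompact_norm_eq_one p
  let S : Fin q → EuclideanSpace ℝ (Fin p) → ℝ := fun j x => ∑ i with σ i = j, x i ^ 2
  have hS : ∀ j, Continuous (S j) := fun j => by simp only [S]; fun_prop
  let w : EuclideanSpace ℝ (Fin p) → ℝ := fun x => Real.exp (∑ i, φ (σ i) * x i ^ 2)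
  have hw : Continuous w := by simp only [w]; fun_prop
  have hfin : IsFiniteMeasure (μH[(p : ℝ) - 1].restrict K) := ⟨by simpa using Ne.lt_top hμ⟩
  have hint : ∀ f : EuclideanSpace ℝ (Fin p) → ℝ, Continuous f →
      Integrable f (μH[(p : ℝ) - 1].restrict K) := fun f hf => by
    obtain ⟨C, hC⟩ := hK.exists_bound_of_continuousOn hf.continuousOn
    exact Integrable.of_bound hf.aestronglyMeasurable C
      ((ae_restrict_mem hK.measurableSet).mono hC)
  have hG : ∀ j, G j = fun ψ => ∫ x in K, S j x * Real.exp (∑ i, ψ (σ i) * x i ^ 2)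
      ∂μH[(p : ℝ) - 1] := fun j => by
    funext ψ
    simpa [G, D, binghamC, S, K] using fderiv_setIntegral_mul_exp hμ σ (g := fun _ => 1)
      continuous_const ψ j
  have hGφ : ∀ j, G j φ = ∫ x in K, S j x * w x ∂μH[(p : ℝ) - 1] := fun j => by rw [hG]
  have hGG : ∀ i j, fderiv ℝ (G j) φ (Pi.single i 1)
      = ∫ x in K, S j x * S i x * w x ∂μH[(p : ℝ) - 1] := fun i j => by
    rw [hG]
    exact fderiv_setIntegral_mul_exp hμ σ (hS j) φ i
  have key : ∀ i j, i ≠ j → fderiv ℝ (G j) φ (Pi.single i 1)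
      = (d j * G i φ - d i * G j φ) / (2 * (φ i - φ j)) := by
    intro i j hij
    rw [eq_div_iff (mul_ne_zero two_ne_zero (sub_ne_zero.2 (hdist i j hij))), hGG, hGφ, hGφ]
    have hzero : ∫ x in K, ∑ a with σ a = i, ∑ b with σ b = j,
        (x a ^ 2 - x b ^ 2 + 2 * (φ j - φ i) * (x a ^ 2 * x b ^ 2)) * w x
          ∂μH[(p : ℝ) - 1] = 0 := by
      rw [integral_finsetSum _ fun a _ => hint _ (by fun_prop)]
      refine Finset.sum_eq_zero fun a ha => ?_
      rw [integral_finsetSum _ fun b _ => hint _ (by fun_prop)]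
      refine Finset.sum_eq_zero fun b hb => ?_
      rw [Finset.mem_filter] at ha hb
      have hab : a ≠ b := fun h => hij (by rw [← ha.2, ← hb.2, h])
      have h := setIntegral_sq_sub_sq_mul_exp hμ (fun i => φ (σ i)) hab
      simpa only [ha.2, hb.2] using h
    have hsums : ∀ x : EuclideanSpace ℝ (Fin p), ∑ a with σ a = i, ∑ b with σ b = j,
        (x a ^ 2 - x b ^ 2 + 2 * (φ j - φ i) * (x a ^ 2 * x b ^ 2)) * w x
        = d j * (S i x * w x) - d i * (S j x * w x)
          - S j x * S i x * w x * (2 * (φ i - φ j)) := fun x => by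
      simp only [← Finset.sum_mul, Finset.sum_add_distrib, Finset.sum_sub_distrib,
        ← Finset.mul_sum, Finset.sum_const, hσ, nsmul_eq_mul, S]
      ring
    simp only [hsums] at hzero
    rw [integral_sub (hint _ (by fun_prop)) (hint _ (by fun_prop)),
      integral_sub (hint _ (by fun_prop)) (hint _ (by fun_prop)), integral_const_mul,
      integral_const_mul, integral_mul_const] at hzero
    linarith
  refine ⟨key, fun i => ?_⟩
  have hsumG : ∑ k, fderiv ℝ (G k) φ (Pi.single i 1) = G i φ := by
    simp only [hGG, hGφ]
    rw [← integral_finsetSum _ fun k _ => hint _ (by fun_prop)]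
    refine setIntegral_congr_fun hK.measurableSet fun x hx => ?_
    have h1 : ∑ k, S k x = 1 := by
      have hx' : ‖x‖ ^ 2 = 1 := by rw [show ‖x‖ = 1 from hx, one_pow]
      rw [EuclideanSpace.real_norm_sq_eq] at hx'
      rw [← hx']
      exact Finset.sum_fiberwise _ _ _
    simp only [← Finset.sum_mul, h1, one_mul]
  rw [← Finset.add_sum_erase _ _ (Finset.mem_univ i)] at hsumG
  rw [eq_sub_iff_add_eq, ← hsumG]
  congr 1
  refine Finset.sum_congr rfl fun k hk => ?_
  rw [hsumG, key i k (Finset.ne_of_mem_erase hk).symm]
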